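/- Let A and B be finite dimensional algebras over a field k. If A and B are singularly equivalent of Morita type with level l, then Ω-ext.dim(A) = Ω-ext.dim(B) and ext.dim(Ω^∞(A-mod)) = ext.dim(Ω^∞(B-mod)). -/

import Mathlib

universe u w w₁ w₂ w₃ v v₁ v₂ v₃

open CategoryTheory Limits Pretriangulated

namespace ExtDim



variable (A : Type u) [Ring A]

/-- `X` belongs to `add M`: `X` is a direct summand of a finite direct sum of copies of `M`. -/
def MemAdd (M X : ModuleCat.{u} A) : Prop :=
  ∃ (n : ℕ) (Y : ModuleCat.{u} A), Nonempty ((↥X × ↥Y) ≃ₗ[A] (Fin n → ↥M))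

/-- The operation `𝒞₁ • 𝒞₂` on classes of modules: (summands of) middle terms of short exact
sequences with outer terms in `𝒞₁` and `𝒞₂`. -/
def Bullet (C₁ C₂ : Set (ModuleCat.{u} A)) : Set (ModuleCat.{u} A) :=
  {X | ∃ (X' M₁ M₂ : ModuleCat.{u} A), M₁ ∈ C₁ ∧ M₂ ∈ C₂ ∧
    ∃ (f : ↥M₁ →ₗ[A] (↥X × ↥X')) (g : (↥X × ↥X') →ₗ[A] ↥M₂),
      Function.Injective f ∧ Function.Surjective g ∧ LinearMap.range f = LinearMap.ker g}

/-- The class `[M]_n`. -/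
def bracket (M : ModuleCat.{u} A) : ℕ → Set (ModuleCat.{u} A)
  | 0 => {X | Subsingleton X}
  | n + 1 => Bullet A {X | MemAdd A M X} (bracket M n)

/-- The extension dimension of a subcategory `𝒜` of `A`-mod: the least `m` such that
`𝒜 ⊆ [M]_{m+1}` for some finitely generated module `M`. -/
noncomputable def extDimCat (𝒜 : Set (ModuleCat.{u} A)) : ℕ∞ :=
  sInf {m : ℕ∞ | ∃ n : ℕ, m = n ∧ ∃ M : ModuleCat.{u} A, Module.Finite A M ∧
    ∀ X ∈ 𝒜, X ∈ bracket A M (n + 1)}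

/-- The subcategory of finitely generated modules, `A`-mod. -/
def fgModules : Set (ModuleCat.{u} A) := {X | Module.Finite A X}

/-- The extension dimension of the Artin algebra `A`. -/
noncomputable def extDim : ℕ∞ := extDimCat A (fgModules A)

/-- A short exact sequence `0 → X → Y → Z → 0` of modules. -/
def SES {X Y Z : ModuleCat.{u} A} (f : ↥X →ₗ[A] ↥Y) (g : ↥Y →ₗ[A] ↥Z) : Prop :=
  Function.Injective f ∧ Function.Surjective g ∧ LinearMap.range f = LinearMap.ker g

/-- `Ω^n(A-mod)`: the subcategory of all `n`-th syzygy modules. -/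
def syzygyCat : ℕ → Set (ModuleCat.{u} A)
  | 0 => fgModules A
  | n + 1 => {X | Module.Finite A X ∧ ∃ (P K : ModuleCat.{u} A),
      Module.Finite A P ∧ Module.Projective A P ∧ K ∈ syzygyCat n ∧
      ∃ (f : ↥X →ₗ[A] ↥P) (g : ↥P →ₗ[A] ↥K), SES A f g}

/-- The `Ω`-extension dimension of `A`. -/
noncomputable def omegaExtDim : ℕ∞ := ⨅ i : ℕ, extDimCat A (syzygyCat A i)

/-- `Ω^∞(A-mod)`: modules admitting an exact sequence `0 → X → P₀ → P₁ → ⋯` with all `Pᵢ`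
finitely generated projective. -/
def infSyzygyCat : Set (ModuleCat.{u} A) :=
  {X | Module.Finite A X ∧ ∃ (K P : ℕ → ModuleCat.{u} A), Nonempty (↥(K 0) ≃ₗ[A] ↥X) ∧
    ∀ i, Module.Finite A (P i) ∧ Module.Projective A (P i) ∧
      ∃ (f : ↥(K i) →ₗ[A] ↥(P i)) (g : ↥(P i) →ₗ[A] ↥(K (i + 1))), SES A f g}

/-- `X` has projective dimension at most `n`. -/
def ProjDimLE : ModuleCat.{u} A → ℕ → Prop
  | X, 0 => Module.Projective A X
  | X, n + 1 => ∃ (K P : ModuleCat.{u} A), Module.Projective A P ∧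
      (∃ (f : ↥K →ₗ[A] ↥P) (g : ↥P →ₗ[A] ↥X), SES A f g) ∧ ProjDimLE K n

/-- The projective dimension of a module, as an element of `ℕ∞`. -/
noncomputable def pdim (X : ModuleCat.{u} A) : ℕ∞ :=
  sInf {m : ℕ∞ | ∃ n : ℕ, m = n ∧ ProjDimLE A X n}

/-- `A` has finite global dimension. -/
def HasFiniteGlobalDimension : Prop := ∃ n : ℕ, ∀ X : ModuleCat.{u} A, ProjDimLE A X n

section StableSyzygy

variable (R : Type u) [Ring R]

/-- `K` is (isomorphic to) the kernel of a surjection from a finitely generated projective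
module onto `W`, i.e. a first syzygy of `W`. -/
def IsSyzygyStep (W K : ModuleCat.{u} R) : Prop :=
  ∃ P : ModuleCat.{u} R, Module.Finite R P ∧ Module.Projective R P ∧
    ∃ (f : ↥K →ₗ[R] ↥P) (g : ↥P →ₗ[R] ↥W), SES R f g

/-- `K` is an `l`-th syzygy of `W` (computed from some resolution by finitely generated
projective modules). -/
def IsNthSyzygy : ℕ → ModuleCat.{u} R → ModuleCat.{u} R → Prop
  | 0, W, K => Nonempty (↥K ≃ₗ[R] ↥W)
  | n + 1, W, K => ∃ K₁ : ModuleCat.{u} R, IsSyzygyStep R W K₁ ∧ IsNthSyzygy n K₁ K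

/-- `Z` and `W` are isomorphic in the stable category: they become isomorphic after adding
(finitely generated) projective direct summands to both sides. -/
def StablyIsomorphic (Z W : ModuleCat.{u} R) : Prop :=
  ∃ P Q : ModuleCat.{u} R, Module.Finite R P ∧ Module.Projective R P ∧
    Module.Finite R Q ∧ Module.Projective R Q ∧
    Nonempty ((↥Z × ↥P) ≃ₗ[R] (↥W × ↥Q))

/-- `Z` is isomorphic, in the stable category, to the `l`-th syzygy `Ω^l(W)`. -/
def StablyIsoNthSyzygy (l : ℕ) (Z W : ModuleCat.{u} R) : Prop :=
  ∃ K : ModuleCat.{u} R, IsNthSyzygy R l W K ∧ StablyIsomorphic R Z K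

end StableSyzygy

section TensorData

variable (R : Type u) [Ring R]

/-- `β` is a biadditive `R`-balanced map. -/
def IsBalancedBiadd {X Y T : Type u} [AddCommGroup X] [AddCommGroup Y] [AddCommGroup T]
    [Module Rᵐᵒᵖ X] [Module R Y] (β : X → Y → T) : Prop :=
  (∀ x₁ x₂ y, β (x₁ + x₂) y = β x₁ y + β x₂ y) ∧
  (∀ x y₁ y₂, β x (y₁ + y₂) = β x y₁ + β x y₂) ∧
  (∀ (r : R) x y, β (MulOpposite.op r • x) y = β x (r • y))

/-- `β : X → Y → T` realizes `T` as the tensor product `X ⊗_R Y` of the right `R`-module `X`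
and the left `R`-module `Y`: it is a universal biadditive `R`-balanced map. -/
def IsTensorProductOver {X Y T : Type u} [AddCommGroup X] [AddCommGroup Y] [AddCommGroup T]
    [Module Rᵐᵒᵖ X] [Module R Y] (β : X → Y → T) : Prop :=
  IsBalancedBiadd R β ∧
  ∀ (T' : Type u) [AddCommGroup T'] (β' : X → Y → T'), IsBalancedBiadd R β' →
    ∃! φ : T →+ T', ∀ x y, φ (β x y) = β' x y

end TensorData

section Enveloping

open scoped TensorProduct

variable (k : Type u) [CommRing k] (A : Type u) [Ring A] [Algebra k A]

/-- A `k`-central `A`-`A`-bimodule, regarded as a module over the enveloping algebra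
`A^e = A ⊗[k] Aᵐᵒᵖ`. -/
noncomputable def envModuleCat (T : Type u) [AddCommGroup T] [Module k T] [Module A T]
    [Module Aᵐᵒᵖ T] [IsScalarTower k A T] [IsScalarTower k Aᵐᵒᵖ T] [SMulCommClass A Aᵐᵒᵖ T] :
    ModuleCat.{u} (A ⊗[k] Aᵐᵒᵖ) :=
  letI : Module (A ⊗[k] Aᵐᵒᵖ) T := TensorProduct.Algebra.module
  ModuleCat.of _ T

end Enveloping

section Statement

open scoped TensorProduct

variable (k : Type u) [Field k]
variable (A B : Type u) [Ring A] [Ring B] [Algebra k A] [Algebra k B]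
variable [Module.Finite k A] [Module.Finite k B]
variable (M : Type u) [AddCommGroup M] [Module k M] [Module A M] [Module Bᵐᵒᵖ M]
variable [IsScalarTower k A M] [IsScalarTower k Bᵐᵒᵖ M] [SMulCommClass A Bᵐᵒᵖ M]
variable (N : Type u) [AddCommGroup N] [Module k N] [Module B N] [Module Aᵐᵒᵖ N]
variable [IsScalarTower k B N] [IsScalarTower k Aᵐᵒᵖ N] [SMulCommClass B Aᵐᵒᵖ N]

/-- The pair of bimodules `(M, N)` defines a singular equivalence of Morita type with
level `l`: the four one-sided modules are finitely generated projective, and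
`M ⊗_B N ≅ Ω^l_{A^e}(A)`, `N ⊗_A M ≅ Ω^l_{B^e}(B)` in the stable categories of bimodules.
The tensor products are encoded via their universal property. -/
def SingularEquivalenceOfMoritaTypeWithLevel (l : ℕ) : Prop :=
  Module.Finite A M ∧ Module.Projective A M ∧
  Module.Finite Bᵐᵒᵖ M ∧ Module.Projective Bᵐᵒᵖ M ∧
  Module.Finite B N ∧ Module.Projective B N ∧
  Module.Finite Aᵐᵒᵖ N ∧ Module.Projective Aᵐᵒᵖ N ∧
  (∀ (T : Type u) [AddCommGroup T] [Module k T] [Module A T] [Module Aᵐᵒᵖ T]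
      [IsScalarTower k A T] [IsScalarTower k Aᵐᵒᵖ T] [SMulCommClass A Aᵐᵒᵖ T]
      (β : M → N → T), IsTensorProductOver B β →
      (∀ (a : A) (m : M) (n : N), β (a • m) n = a • β m n) →
      (∀ (a : Aᵐᵒᵖ) (m : M) (n : N), β m (a • n) = a • β m n) →
      (∀ (c : k) (m : M) (n : N), β (c • m) n = c • β m n) →
      StablyIsoNthSyzygy (A ⊗[k] Aᵐᵒᵖ) l (envModuleCat k A T) (envModuleCat k A A)) ∧
  (∀ (T : Type u) [AddCommGroup T] [Module k T] [Module B T] [Module Bᵐᵒᵖ T]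
      [IsScalarTower k B T] [IsScalarTower k Bᵐᵒᵖ T] [SMulCommClass B Bᵐᵒᵖ T]
      (β : N → M → T), IsTensorProductOver A β →
      (∀ (b : B) (n : N) (m : M), β (b • n) m = b • β n m) →
      (∀ (b : Bᵐᵒᵖ) (n : N) (m : M), β n (b • m) = b • β n m) →
      (∀ (c : k) (n : N) (m : M), β (c • n) m = c • β n m) →
      StablyIsoNthSyzygy (B ⊗[k] Bᵐᵒᵖ) l (envModuleCat k B T) (envModuleCat k B B))

end Statement

end ExtDim

namespace ExtDimAux

open ExtDim MulOpposite
open scoped TensorProduct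

section BTdef

variable (R : Type u) [Ring R] (X : Type u) [AddCommGroup X] [Module Rᵐᵒᵖ X]
  (Y : Type u) [AddCommGroup Y] [Module R Y]

/-- The balancing relations. -/
def balRel : Submodule ℤ (X ⊗[ℤ] Y) :=
  Submodule.span ℤ {t | ∃ (r : R) (x : X) (y : Y),
    t = (op r • x) ⊗ₜ[ℤ] y - x ⊗ₜ[ℤ] (r • y)}

/-- The tensor product `X ⊗_R Y` over a noncommutative ring. -/
def BT : Type u := (X ⊗[ℤ] Y) ⧸ balRel R X Y

noncomputable instance : AddCommGroup (BT R X Y) :=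
  inferInstanceAs (AddCommGroup ((X ⊗[ℤ] Y) ⧸ balRel R X Y))

variable {X Y}

/-- Pure tensors. -/
def tm (x : X) (y : Y) : BT R X Y := (balRel R X Y).mkQ (x ⊗ₜ[ℤ] y)

lemma tm_balanced : IsBalancedBiadd R (tm R : X → Y → BT R X Y) := by
  refine ⟨fun x₁ x₂ y => ?_, fun x y₁ y₂ => ?_, fun r x y => ?_⟩
  · simp only [tm, TensorProduct.add_tmul, map_add]; rfl
  · simp only [tm, TensorProduct.tmul_add, map_add]; rfl
  · refine (Submodule.Quotient.eq _).2 (Submodule.subset_span ⟨r, x, y, rfl⟩)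

lemma add_tm (x₁ x₂ : X) (y : Y) : tm R (x₁ + x₂) y = tm R x₁ y + tm R x₂ y :=
  (tm_balanced R).1 x₁ x₂ y

lemma tm_add (x : X) (y₁ y₂ : Y) : tm R x (y₁ + y₂) = tm R x y₁ + tm R x y₂ :=
  (tm_balanced R).2.1 x y₁ y₂

lemma tm_smul (r : R) (x : X) (y : Y) : tm R (op r • x) y = tm R x (r • y) :=
  (tm_balanced R).2.2 r x y

/-- `tm` as a biadditive map. -/
noncomputable def tmHom (x : X) : Y →+ BT R X Y := AddMonoidHom.mk' (tm R x) (tm_add R x)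

/-- `tm` as a biadditive map. -/
noncomputable def tmHom' (y : Y) : X →+ BT R X Y := AddMonoidHom.mk' (fun x => tm R x y) (fun a b => add_tm R a b y)

lemma tm_sum {ι : Type*} (s : Finset ι) (x : X) (y : ι → Y) :
    tm R x (∑ i ∈ s, y i) = ∑ i ∈ s, tm R x (y i) := map_sum (tmHom R x) y s

lemma sum_tm {ι : Type*} (s : Finset ι) (x : ι → X) (y : Y) :
    tm R (∑ i ∈ s, x i) y = ∑ i ∈ s, tm R (x i) y := map_sum (tmHom' R y) x s

lemma tm_zero (x : X) : tm R x (0 : Y) = 0 := map_zero (tmHom R x)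
lemma zero_tm (y : Y) : tm R (0 : X) y = 0 := map_zero (tmHom' R y)

variable {R}

lemma BT_ind {p : BT R X Y → Prop} (h0 : p 0) (h1 : ∀ x y, p (tm R x y))
    (h2 : ∀ a b, p a → p b → p (a + b)) (t : BT R X Y) : p t := by
  obtain ⟨t, rfl⟩ := Submodule.mkQ_surjective (balRel R X Y) t
  induction t using TensorProduct.induction_on with
  | zero => rw [map_zero]; exact h0
  | tmul x y => exact h1 x y
  | add a b ha hb => rw [map_add]; exact h2 _ _ ha hb

variable {T : Type u} [AddCommGroup T]

lemma BT_ext {f g : BT R X Y →+ T} (h : ∀ x y, f (tm R x y) = g (tm R x y)) : f = g := by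
  ext t
  induction t using BT_ind with
  | h0 => simp
  | h1 x y => exact h x y
  | h2 a b ha hb => rw [map_add, map_add, ha, hb]

/-- The biadditive map as a hom. -/
def biHom (β : X → Y → T) (h : IsBalancedBiadd R β) : X →+ Y →+ T :=
  AddMonoidHom.mk' (fun x => AddMonoidHom.mk' (β x) (h.2.1 x))
    (fun a b => by ext y; exact h.1 a b y)

/-- The universal property. -/
noncomputable def lift (β : X → Y → T) (h : IsBalancedBiadd R β) : BT R X Y →+ T :=
  ((balRel R X Y).liftQ (TensorProduct.liftAddHom (biHom β h)
    (fun r x y => by simp)).toIntLinearMap (by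
      refine Submodule.span_le.2 ?_
      rintro _ ⟨r, x, y, rfl⟩
      have := h.2.2 r x y
      simp [biHom, this])).toAddMonoidHom

@[simp] lemma lift_tm (β : X → Y → T) (h : IsBalancedBiadd R β) (x : X) (y : Y) :
    lift β h (tm R x y) = β x y := rfl

lemma isTensor : IsTensorProductOver R (tm R : X → Y → BT R X Y) := by
  refine ⟨tm_balanced R, fun T' _ β' h => ⟨lift β' h, fun x y => lift_tm β' h x y, ?_⟩⟩
  intro φ hφ
  exact BT_ext fun x y => by rw [hφ, lift_tm]

end BTdef

section Actions

variable {R : Type u} [Ring R] {X : Type u} [AddCommGroup X] [Module Rᵐᵒᵖ X]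
  {Y : Type u} [AddCommGroup Y] [Module R Y]
  {X' : Type u} [AddCommGroup X'] [Module Rᵐᵒᵖ X']
  {Y' : Type u} [AddCommGroup Y'] [Module R Y']

/-- Functoriality. -/
noncomputable def bmap (f : X →ₗ[Rᵐᵒᵖ] X') (g : Y →ₗ[R] Y') : BT R X Y →+ BT R X' Y' :=
  lift (fun x y => tm R (f x) (g y)) ⟨fun a b y => by dsimp only; rw [map_add, add_tm],
    fun x a b => by dsimp only; rw [map_add, tm_add],
    fun r x y => by dsimp only; rw [map_smul, map_smul, tm_smul]⟩

@[simp] lemma bmap_tm (f : X →ₗ[Rᵐᵒᵖ] X') (g : Y →ₗ[R] Y') (x : X) (y : Y) :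
    bmap f g (tm R x y) = tm R (f x) (g y) := rfl

variable {S : Type u} [Ring S] [Module S X] [SMulCommClass S Rᵐᵒᵖ X]
   [Module S X'] [SMulCommClass S Rᵐᵒᵖ X']

/-- The left action. -/
noncomputable def lact (s : S) : BT R X Y →+ BT R X Y :=
  bmap { toFun := fun x => s • x, map_add' := smul_add s,
         map_smul' := fun r x => smul_comm s r x } LinearMap.id

noncomputable instance leftModule : Module S (BT R X Y) where
  smul s t := lact s t
  one_smul t := by
    change lact (1 : S) t = AddMonoidHom.id _ t
    refine DFunLike.congr_fun (BT_ext fun x y => ?_) t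
    simp [lact]
  mul_smul a b t := by
    change lact (a * b) t = ((lact a).comp (lact b)) t
    refine DFunLike.congr_fun (BT_ext fun x y => ?_) t
    simp [lact, mul_smul]
  smul_zero a := map_zero (lact a)
  smul_add a := map_add (lact a)
  add_smul a b t := by
    change lact (a + b) t = (lact a + lact b : BT R X Y →+ BT R X Y) t
    refine DFunLike.congr_fun (BT_ext fun x y => ?_) t
    simp [lact, add_smul, add_tm]
  zero_smul t := by
    change lact (0 : S) t = (0 : BT R X Y →+ BT R X Y) t
    refine DFunLike.congr_fun (BT_ext fun x y => ?_) t
    simp [lact, zero_tm]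

lemma smul_tm (s : S) (x : X) (y : Y) : s • tm R x y = tm R (s • x) y := rfl

/-- A linear map out of a tensor product. -/
noncomputable def liftL {T : Type u} [AddCommGroup T] [Module S T] (φ : BT R X Y →+ T)
    (hs : ∀ (s : S) x y, φ (tm R (s • x) y) = s • φ (tm R x y)) : BT R X Y →ₗ[S] T :=
  { φ with
    map_smul' := fun s t => by
      dsimp
      induction t using BT_ind with
      | h0 => simp
      | h1 x y => rw [smul_tm, hs]
      | h2 a b ha hb => rw [smul_add, map_add, map_add, ha, hb, smul_add] }

@[simp] lemma liftL_apply {T : Type u} [AddCommGroup T] [Module S T] (φ : BT R X Y →+ T)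
    (hs : ∀ (s : S) x y, φ (tm R (s • x) y) = s • φ (tm R x y)) (t) : liftL φ hs t = φ t := rfl

lemma BTL_ext {T : Type u} [AddCommGroup T] [Module S T] {f g : BT R X Y →ₗ[S] T}
    (h : ∀ x y, f (tm R x y) = g (tm R x y)) : f = g := by
  ext t
  exact DFunLike.congr_fun (BT_ext (f := f.toAddMonoidHom) (g := g.toAddMonoidHom) h) t

variable (S X) in
/-- Functoriality in the second variable. -/
noncomputable def mapR (g : Y →ₗ[R] Y') : BT R X Y →ₗ[S] BT R X Y' :=
  liftL (bmap LinearMap.id g) (fun _ _ _ => rfl)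

@[simp] lemma mapR_tm (g : Y →ₗ[R] Y') (x : X) (y : Y) :
    mapR X S g (tm R x y) = tm R x (g y) := rfl

variable (Y) in
/-- Functoriality in the first variable. -/
noncomputable def mapL (f : X →ₗ[Rᵐᵒᵖ] X') (hf : ∀ (s : S) x, f (s • x) = s • f x) :
    BT R X Y →ₗ[S] BT R X' Y :=
  liftL (bmap f LinearMap.id) (fun s x y => by simp [hf, smul_tm])

@[simp] lemma mapL_tm (f : X →ₗ[Rᵐᵒᵖ] X') (hf : ∀ (s : S) x, f (s • x) = s • f x)
    (x : X) (y : Y) : mapL Y f hf (tm R x y) = tm R (f x) y := rfl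

end Actions

section RightAction

variable {R : Type u} [Ring R] {X : Type u} [AddCommGroup X] [Module Rᵐᵒᵖ X]
  {Y : Type u} [AddCommGroup Y] [Module R Y]
  {S : Type u} [Ring S] [Module Sᵐᵒᵖ Y] [SMulCommClass R Sᵐᵒᵖ Y]

/-- The right action as a linear map. -/
def ractAux (s : Sᵐᵒᵖ) : Y →ₗ[R] Y where
  toFun x := s • x
  map_add' := smul_add s
  map_smul' r x := (smul_comm r s x).symm

/-- The right action. -/
noncomputable def ract (s : Sᵐᵒᵖ) : BT R X Y →+ BT R X Y :=
  bmap LinearMap.id (ractAux s)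

noncomputable instance rightModule : Module Sᵐᵒᵖ (BT R X Y) where
  smul s t := ract s t
  one_smul t := by
    change ract (1 : Sᵐᵒᵖ) t = AddMonoidHom.id _ t
    refine DFunLike.congr_fun (BT_ext fun x y => ?_) t
    simp [ract, ractAux]
  mul_smul a b t := by
    change ract (a * b) t = ((ract a).comp (ract b)) t
    refine DFunLike.congr_fun (BT_ext fun x y => ?_) t
    simp [ract, ractAux, mul_smul]
  smul_zero a := map_zero (ract a)
  smul_add a := map_add (ract a)
  add_smul a b t := by
    change ract (a + b) t = (ract a + ract b : BT R X Y →+ BT R X Y) t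
    refine DFunLike.congr_fun (BT_ext fun x y => ?_) t
    simp [ract, ractAux, add_smul, tm_add]
  zero_smul t := by
    change ract (0 : Sᵐᵒᵖ) t = (0 : BT R X Y →+ BT R X Y) t
    refine DFunLike.congr_fun (BT_ext fun x y => ?_) t
    simp [ract, ractAux, tm_zero]

lemma rsmul_tm (s : Sᵐᵒᵖ) (x : X) (y : Y) : s • tm R x y = tm R x (s • y) := rfl

instance bimod {S' : Type u} [Ring S'] [Module S' X] [SMulCommClass S' Rᵐᵒᵖ X] :
    SMulCommClass S' Sᵐᵒᵖ (BT R X Y) where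
  smul_comm a b t := by
    change ((lact a : BT R X Y →+ BT R X Y).comp (ract b)) t =
      ((ract b : BT R X Y →+ BT R X Y).comp (lact a)) t
    refine DFunLike.congr_fun (BT_ext fun x y => ?_) t
    rfl

end RightAction

section Ret

variable {R : Type u} [Ring R]

lemma dualBasis (P : Type u) [AddCommGroup P] [Module R P] [Module.Finite R P]
    [Module.Projective R P] :
    ∃ (n : ℕ) (p : Fin n → P) (φ : Fin n → (P →ₗ[R] R)), ∀ x, ∑ i, φ i x • p i = x := by
  obtain ⟨n, f, hf⟩ := Module.Finite.exists_fin' R P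
  obtain ⟨s, hs⟩ := Module.projective_lifting_property f LinearMap.id hf
  refine ⟨n, fun i => f (Pi.single i 1), fun i => (LinearMap.proj i).comp s, fun x => ?_⟩
  conv_rhs => rw [← LinearMap.id_apply (R := R) x, ← hs]
  simp only [LinearMap.comp_apply, LinearMap.proj_apply, ← map_smul, ← map_sum]
  congr 1
  ext j
  simp [Pi.single_apply]

lemma fgproj_of_retract {P Q : Type u} [AddCommGroup P] [Module R P] [AddCommGroup Q] [Module R Q]
    (hf : Module.Finite R Q) (hp : Module.Projective R Q)
    (s : P →ₗ[R] Q) (r : Q →ₗ[R] P) (h : ∀ x, r (s x) = x) :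
    Module.Finite R P ∧ Module.Projective R P :=
  ⟨Module.Finite.of_surjective r fun x => ⟨s x, h x⟩,
    Module.Projective.of_split s r (LinearMap.ext h)⟩

/-- `X` is a direct summand of `Y ⊕ P`, with `P` finitely generated projective. -/
def StRet (R : Type u) [Ring R] (X Y : Type u) [AddCommGroup X] [Module R X]
    [AddCommGroup Y] [Module R Y] : Prop :=
  ∃ P : ModuleCat.{u} R, Module.Finite R P ∧ Module.Projective R P ∧
    ∃ (a : X →ₗ[R] Y) (b : Y →ₗ[R] X) (c : X →ₗ[R] P) (d : P →ₗ[R] X),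
      ∀ x, b (a x) + d (c x) = x

lemma StRet.of_equiv {X Y : Type u} [AddCommGroup X] [Module R X]
    [AddCommGroup Y] [Module R Y] (e : X ≃ₗ[R] Y) : StRet R X Y :=
  ⟨ModuleCat.of R PUnit, inferInstance, inferInstanceAs (Module.Projective R PUnit.{u+1}),
    e.toLinearMap, e.symm.toLinearMap, 0, 0, fun x => by simp⟩

lemma StRet.trans {X Y Z : Type u} [AddCommGroup X] [Module R X]
    [AddCommGroup Y] [Module R Y] [AddCommGroup Z] [Module R Z]
    (h₁ : StRet R X Y) (h₂ : StRet R Y Z) : StRet R X Z := by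
  obtain ⟨P, hP, hP', a, b, c, d, h⟩ := h₁
  obtain ⟨Q, hQ, hQ', a', b', c', d', h'⟩ := h₂
  refine ⟨ModuleCat.of R (P × Q), inferInstanceAs (Module.Finite R (P × Q)),
    inferInstanceAs (Module.Projective R (P × Q)), a' ∘ₗ a, b ∘ₗ b', c.prod (c' ∘ₗ a),
    d.coprod (b ∘ₗ d'), fun x => ?_⟩
  have h1 := h x
  have h2 := h' (a x)
  conv_rhs => rw [← h1, ← h2]
  simp
  abel

lemma StRet.step {Z Z' K K' : ModuleCat.{u} R} (hK : IsSyzygyStep R Z K)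
    (hK' : IsSyzygyStep R Z' K') (h : StRet R Z Z') : StRet R K K' := by
  obtain ⟨P, hP, hP', f, g, hf, hg, hfg⟩ := hK
  obtain ⟨P', hQ, hQ', f', g', hf', hg', hfg'⟩ := hK'
  obtain ⟨P₀, h0, h0', a, b, c, d, h⟩ := h
  obtain ⟨at', hat⟩ := Module.projective_lifting_property g' (a ∘ₗ g) hg'
  obtain ⟨bt, hbt⟩ := Module.projective_lifting_property g (b ∘ₗ g') hg
  obtain ⟨dt, hdt⟩ := Module.projective_lifting_property g d hg
  have gf : ∀ x, g (f x) = 0 := fun x => by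
    have : f x ∈ LinearMap.ker g := hfg ▸ LinearMap.mem_range_self f x
    exact this
  have gf' : ∀ x, g' (f' x) = 0 := fun x => by
    have : f' x ∈ LinearMap.ker g' := hfg' ▸ LinearMap.mem_range_self f' x
    exact this
  -- maps landing in the kernel factor
  have fac : ∀ (W : ModuleCat.{u} R) (u : W →ₗ[R] P), (∀ w, g (u w) = 0) →
      ∃ v : W →ₗ[R] K, ∀ w, f (v w) = u w := fun W u hu => by
    let e := LinearEquiv.ofInjective f hf
    refine ⟨e.symm.toLinearMap ∘ₗ u.codRestrict (LinearMap.range f) (fun w => by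
      rw [hfg]; exact hu w), fun w => ?_⟩
    have := LinearEquiv.apply_symm_apply e (u.codRestrict (LinearMap.range f) (fun w => by
      rw [hfg]; exact hu w) w)
    exact congrArg Subtype.val this
  have fac' : ∀ (W : ModuleCat.{u} R) (u : W →ₗ[R] P'), (∀ w, g' (u w) = 0) →
      ∃ v : W →ₗ[R] K', ∀ w, f' (v w) = u w := fun W u hu => by
    let e := LinearEquiv.ofInjective f' hf'
    refine ⟨e.symm.toLinearMap ∘ₗ u.codRestrict (LinearMap.range f') (fun w => by
      rw [hfg']; exact hu w), fun w => ?_⟩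
    have := LinearEquiv.apply_symm_apply e (u.codRestrict (LinearMap.range f') (fun w => by
      rw [hfg']; exact hu w) w)
    exact congrArg Subtype.val this
  have hat' : ∀ x, g' (at' x) = a (g x) := fun x => LinearMap.congr_fun hat x
  have hbt' : ∀ x, g (bt x) = b (g' x) := fun x => LinearMap.congr_fun hbt x
  have hdt' : ∀ x, g (dt x) = d x := fun x => LinearMap.congr_fun hdt x
  obtain ⟨α, hα⟩ := fac' K (at' ∘ₗ f) (fun w => by simp [hat', gf])
  obtain ⟨β, hβ⟩ := fac K' (bt ∘ₗ f') (fun w => by simp [hbt', gf'])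
  obtain ⟨η, hη⟩ := fac P (LinearMap.id - bt ∘ₗ at' - dt ∘ₗ c ∘ₗ g) (fun w => by
    have := h (g w)
    simp only [LinearMap.sub_apply, LinearMap.comp_apply, map_sub, hbt', hat', hdt',
      LinearMap.id_apply]
    rw [sub_sub, this, sub_self])
  refine ⟨P, hP, hP', α, β, f, η, fun x => hf ?_⟩
  rw [map_add, hβ, hη]
  simp [hα, gf]

lemma StRet.compare : ∀ (n : ℕ) {Z Z' K K' : ModuleCat.{u} R}, IsNthSyzygy R n Z K →
    IsNthSyzygy R n Z' K' → StRet R Z Z' → StRet R K K'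
  | 0, _, _, _, _, ⟨e⟩, ⟨e'⟩, h => ((StRet.of_equiv e).trans h).trans (StRet.of_equiv e'.symm)
  | n + 1, _, _, _, _, ⟨_, h1, h2⟩, ⟨_, h1', h2'⟩, h =>
    StRet.compare n h2 h2' (StRet.step h1 h1' h)

/-- The splitting of a retract. -/
noncomputable def splitEquiv {X E : Type u} [AddCommGroup X] [Module R X] [AddCommGroup E]
    [Module R E] (s : X →ₗ[R] E) (r : E →ₗ[R] X) (h : ∀ x, r (s x) = x) :
    (X × LinearMap.ker r) ≃ₗ[R] E :=
  LinearEquiv.ofBijective (s.coprod (LinearMap.ker r).subtype) (by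
    constructor
    · rw [← LinearMap.ker_eq_bot, LinearMap.ker_eq_bot']
      rintro ⟨x, c⟩ hx
      have hc : r c = 0 := c.2
      simp only [LinearMap.coprod_apply, Submodule.subtype_apply] at hx
      have h2 := congrArg r hx
      rw [map_add, h, hc, add_zero, map_zero] at h2
      subst h2
      simp only [map_zero, zero_add] at hx
      ext
      · rfl
      · exact hx
    · intro y
      refine ⟨(r y, ⟨y - s (r y), by simp [h]⟩), by simp⟩)

lemma memAdd_of_retract {M X : ModuleCat.{u} R} {ι : Type} [Fintype ι]
    (s : X →ₗ[R] (ι → M)) (r : (ι → M) →ₗ[R] X) (h : ∀ x, r (s x) = x) : MemAdd R M X :=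
  ⟨Fintype.card ι, ModuleCat.of R (LinearMap.ker r),
    ⟨(splitEquiv s r h).trans (LinearEquiv.funCongrLeft R M (Fintype.equivFin ι).symm)⟩⟩

lemma retract_of_memAdd {M X : ModuleCat.{u} R} (h : MemAdd R M X) :
    ∃ (n : ℕ) (s : X →ₗ[R] (Fin n → M)) (r : (Fin n → M) →ₗ[R] X), ∀ x, r (s x) = x := by
  obtain ⟨n, Y, ⟨e⟩⟩ := h
  exact ⟨n, e.toLinearMap ∘ₗ LinearMap.inl R X Y, LinearMap.fst R X Y ∘ₗ e.symm.toLinearMap,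
    fun x => by simp⟩

lemma bullet_of_retract {C₁ C₂ : Set (ModuleCat.{u} R)} {X M₁ M₂ E : ModuleCat.{u} R}
    (h₁ : M₁ ∈ C₁) (h₂ : M₂ ∈ C₂) (f : M₁ →ₗ[R] E) (g : E →ₗ[R] M₂) (hfg : SES R f g)
    (s : X →ₗ[R] E) (r : E →ₗ[R] X) (h : ∀ x, r (s x) = x) : X ∈ Bullet R C₁ C₂ := by
  obtain ⟨hf, hg, hr⟩ := hfg
  let e := splitEquiv s r h
  refine ⟨ModuleCat.of R (LinearMap.ker r), M₁, M₂, h₁, h₂, e.symm.toLinearMap ∘ₗ f,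
    g ∘ₗ e.toLinearMap, e.symm.injective.comp hf, hg.comp e.surjective, ?_⟩
  ext y
  have : g (e y) = 0 ↔ e y ∈ LinearMap.range f := by rw [hr]; rfl
  change _ ↔ g (e y) = 0
  rw [this]
  constructor
  · rintro ⟨m, rfl⟩; exact ⟨m, by simp⟩
  · rintro ⟨m, hm⟩; exact ⟨m, by simp [hm]⟩

lemma bullet_retract {C₁ C₂ : Set (ModuleCat.{u} R)} {X : ModuleCat.{u} R}
    (hX : X ∈ Bullet R C₁ C₂) : ∃ (M₁ M₂ E : ModuleCat.{u} R) (f : M₁ →ₗ[R] E) (g : E →ₗ[R] M₂)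
      (s : X →ₗ[R] E) (r : E →ₗ[R] X), M₁ ∈ C₁ ∧ M₂ ∈ C₂ ∧ SES R f g ∧ ∀ x, r (s x) = x := by
  obtain ⟨X', M₁, M₂, h₁, h₂, f, g, hf, hg, hr⟩ := hX
  exact ⟨M₁, M₂, ModuleCat.of R (X × X'), f, g, LinearMap.inl R X X', LinearMap.fst R X X',
    h₁, h₂, ⟨hf, hg, hr⟩, fun x => rfl⟩

lemma bracket_mono {M M' : ModuleCat.{u} R} (h : ∀ X, MemAdd R M X → MemAdd R M' X) :
    ∀ (n : ℕ) (X : ModuleCat.{u} R), X ∈ bracket R M n → X ∈ bracket R M' n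
  | 0, _, hX => hX
  | n + 1, X, hX => by
    obtain ⟨X', M₁, M₂, h₁, h₂, h3⟩ := hX
    exact ⟨X', M₁, M₂, h _ h₁, bracket_mono h n _ h₂, h3⟩

lemma memAdd_prod {M P X Q : ModuleCat.{u} R} (hX : MemAdd R M X) (hQ : MemAdd R P Q) :
    MemAdd R (ModuleCat.of R (M × P)) (ModuleCat.of R (X × Q)) := by
  obtain ⟨n, s, r, h⟩ := retract_of_memAdd hX
  obtain ⟨m, s', r', h'⟩ := retract_of_memAdd hQ
  let S : (X × Q) →ₗ[R] (Fin n ⊕ Fin m → M × P) := LinearMap.pi fun i =>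
    Sum.elim (fun i => LinearMap.inl R M P ∘ₗ LinearMap.proj i ∘ₗ s ∘ₗ LinearMap.fst R X Q)
      (fun j => LinearMap.inr R M P ∘ₗ LinearMap.proj j ∘ₗ s' ∘ₗ LinearMap.snd R X Q) i
  let T : (Fin n ⊕ Fin m → M × P) →ₗ[R] (X × Q) := LinearMap.prod
    (r ∘ₗ LinearMap.pi fun i => LinearMap.fst R M P ∘ₗ LinearMap.proj (Sum.inl i))
    (r' ∘ₗ LinearMap.pi fun i => LinearMap.snd R M P ∘ₗ LinearMap.proj (Sum.inr i))
  refine memAdd_of_retract (ι := Fin n ⊕ Fin m) S T fun x => ?_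
  exact Prod.ext (h x.1) (h' x.2)

lemma memAdd_left {M P X : ModuleCat.{u} R} (hX : MemAdd R M X) :
    MemAdd R (ModuleCat.of R (M × P)) X := by
  obtain ⟨n, s, r, h⟩ := retract_of_memAdd hX
  let S : X →ₗ[R] (Fin n → M × P) :=
    LinearMap.pi fun i => LinearMap.inl R M P ∘ₗ LinearMap.proj i ∘ₗ s
  let T : (Fin n → M × P) →ₗ[R] X :=
    r ∘ₗ LinearMap.pi fun i => LinearMap.fst R M P ∘ₗ LinearMap.proj i
  exact memAdd_of_retract (ι := Fin n) S T fun x => h x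

lemma memAdd_projective {P : ModuleCat.{u} R} (h : Module.Finite R P)
    (h' : Module.Projective R P) : MemAdd R (ModuleCat.of R R) P := by
  obtain ⟨n, f, hf⟩ := Module.Finite.exists_fin' R P
  obtain ⟨s, hs⟩ := Module.projective_lifting_property f LinearMap.id hf
  exact memAdd_of_retract (ι := Fin n) s f (fun x => LinearMap.congr_fun hs x)

lemma bracket_of_stRet {M X Y : ModuleCat.{u} R} (n : ℕ) (hY : Y ∈ bracket R M (n + 1))
    (h : StRet R X Y) : X ∈ bracket R (ModuleCat.of R (M × R)) (n + 1) := by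
  obtain ⟨P, hP, hP', a, b, c, d, h⟩ := h
  obtain ⟨M₁, M₂, E, f, g, s, r, h₁, h₂, ⟨hf, hg, hfg⟩, hsr⟩ := bullet_retract hY
  refine bullet_of_retract (M₁ := ModuleCat.of R (M₁ × P)) (M₂ := M₂)
    (E := ModuleCat.of R (E × P))
    (memAdd_prod h₁ (memAdd_projective hP hP'))
    (bracket_mono (fun X hX => memAdd_left (P := ModuleCat.of R R) hX) n _ h₂) (f.prodMap LinearMap.id)
    (g ∘ₗ LinearMap.fst R E P) ⟨?_, ?_, ?_⟩ ((s ∘ₗ a).prod c) ((b ∘ₗ r).coprod d) ?_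
  · exact Function.Injective.prodMap hf Function.injective_id
  · exact hg.comp Prod.fst_surjective
  · ext ⟨e, p⟩
    change _ ↔ e ∈ LinearMap.ker g
    rw [← hfg]
    constructor
    · rintro ⟨⟨m, p⟩, h⟩
      exact ⟨m, congrArg Prod.fst h⟩
    · rintro ⟨m, h⟩
      exact ⟨(m, p), Prod.ext h rfl⟩
  · intro x
    change b (r (s (a x))) + d (c x) = x
    rw [hsr, h]

end Ret

lemma extDimCat_le {A B : Type u} [Ring A] [Ring B] {𝒜 : Set (ModuleCat.{u} A)}
    {ℬ : Set (ModuleCat.{u} B)}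
    (h : ∀ (n : ℕ) (M : ModuleCat.{u} A), Module.Finite A M →
      (∀ X ∈ 𝒜, X ∈ bracket A M (n + 1)) → ∃ M' : ModuleCat.{u} B, Module.Finite B M' ∧
        ∀ Y ∈ ℬ, Y ∈ bracket B M' (n + 1)) : extDimCat B ℬ ≤ extDimCat A 𝒜 := by
  refine sInf_le_sInf ?_
  rintro _ ⟨n, rfl, M, hM, hX⟩
  exact ⟨n, rfl, h n M hM hX⟩

lemma projPi {R : Type u} [Ring R] (N : Type u) [AddCommGroup N] [Module R N]
    [Module.Projective R N] (n : ℕ) : Module.Projective R (Fin n → N) :=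
  Module.Projective.of_equiv (DirectSum.linearEquivFunOnFintype R (Fin n) (fun _ => N))

section Functor

variable {A B : Type u} [Ring A] [Ring B] {N : Type u} [AddCommGroup N] [Module B N]
  [Module Aᵐᵒᵖ N] [SMulCommClass B Aᵐᵒᵖ N]

lemma mapR_comp_apply {X Y Z : Type u} [AddCommGroup X] [Module A X] [AddCommGroup Y] [Module A Y]
    [AddCommGroup Z] [Module A Z] (f : X →ₗ[A] Y) (g : Y →ₗ[A] Z) (t : BT A N X) :
    mapR N B g (mapR N B f t) = mapR N B (g ∘ₗ f) t := by
  rw [← LinearMap.comp_apply]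
  refine LinearMap.congr_fun (BTL_ext fun x y => ?_) t
  rfl

lemma mapR_id_apply {X : Type u} [AddCommGroup X] [Module A X] {f : X →ₗ[A] X}
    (hf : ∀ x, f x = x) (t : BT A N X) : mapR N B f t = t := by
  rw [show f = LinearMap.id from LinearMap.ext hf]
  conv_rhs => rw [← LinearMap.id_apply (R := B) t]
  refine LinearMap.congr_fun (BTL_ext fun x y => ?_) t
  rfl

lemma mapR_ses [Module.Finite Aᵐᵒᵖ N] [Module.Projective Aᵐᵒᵖ N]
    {X Y Z : ModuleCat.{u} A} {f : X →ₗ[A] Y} {g : Y →ₗ[A] Z} (h : SES A f g) :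
    SES B (X := ModuleCat.of B (BT A N X)) (Y := ModuleCat.of B (BT A N Y))
      (Z := ModuleCat.of B (BT A N Z)) (mapR N B f) (mapR N B g) := by
  obtain ⟨n, p, φ, hφ⟩ := dualBasis (R := Aᵐᵒᵖ) N
  obtain ⟨hf, hg, hfg⟩ := h
  have gf : ∀ x, g (f x) = 0 := fun x => by
    have : f x ∈ LinearMap.ker g := hfg ▸ LinearMap.mem_range_self f x
    exact this
  -- the components of the embedding in a power
  let c : ∀ (W : ModuleCat.{u} A), Fin n → (BT A N W →+ W) := fun W j =>
    lift (fun x y => (φ j x).unop • y) ⟨fun a b y => by simp [add_smul],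
      fun x a b => by simp, fun r x y => by simp [mul_smul]⟩
  have hc : ∀ W j x y, c W j (tm A x y) = (φ j x).unop • y := fun _ _ _ _ => rfl
  have hrec : ∀ (W : ModuleCat.{u} A) (t : BT A N W), ∑ j, tm A (p j) (c W j t) = t := fun W t => by
    induction t using BT_ind with
    | h0 => simp [tm_zero]
    | h1 x y =>
      simp only [hc]
      conv_rhs => rw [← hφ x, sum_tm]
      refine Finset.sum_congr rfl fun j _ => ?_
      rw [← tm_smul, op_unop]
    | h2 a b ha hb => simp only [map_add, tm_add, Finset.sum_add_distrib, ha, hb]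
  have nat : ∀ (W W' : ModuleCat.{u} A) (u : W →ₗ[A] W') j t,
      c W' j (mapR N B u t) = u (c W j t) := fun W W' u j t => by
    induction t using BT_ind with
    | h0 => simp
    | h1 x y => simp [hc]
    | h2 a b ha hb => simp only [map_add, ha, hb]
  refine ⟨?_, ?_, ?_⟩
  · rw [← LinearMap.ker_eq_bot, LinearMap.ker_eq_bot']
    intro t ht
    have ht : mapR N B f t = 0 := ht
    have h1 : ∀ j, c X j t = 0 := fun j => hf (by rw [← nat, ht, map_zero, map_zero])
    refine (hrec X t).symm.trans (Finset.sum_eq_zero fun j _ => ?_)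
    rw [h1, tm_zero]
  · intro t
    choose y hy using fun j => hg (c Z j t)
    refine ⟨∑ j, tm A (p j) (y j), ?_⟩
    refine Eq.trans ?_ (hrec Z t)
    change mapR N B g _ = _
    simp [hy]
  · ext t
    constructor
    · rintro ⟨s, rfl⟩
      change mapR N B g (mapR N B f s) = 0
      rw [mapR_comp_apply, show g ∘ₗ f = 0 from LinearMap.ext gf]
      induction s using BT_ind with
      | h0 => simp
      | h1 x y => simp [tm_zero]
      | h2 a b ha hb => rw [map_add, ha, hb, add_zero]
    · intro ht
      have ht : mapR N B g t = 0 := ht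
      have h1 : ∀ j, ∃ x, f x = c Y j t := fun j => by
        have : c Y j t ∈ LinearMap.ker g := by
          rw [LinearMap.mem_ker, ← nat, ht, map_zero]
        rwa [← hfg] at this
      choose x hx using h1
      refine ⟨∑ j, tm A (p j) (x j), ?_⟩
      refine Eq.trans ?_ (hrec Y t)
      change mapR N B f _ = _
      simp [hx]

lemma BT_finite [Module.Finite B N] (X : Type u) [AddCommGroup X] [Module A X]
    [Module.Finite A X] : Module.Finite B (BT A N X) := by
  obtain ⟨n, f, hf⟩ := Module.Finite.exists_fin' A X
  let c : (Fin n → N) →ₗ[B] BT A N X :=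
    { toFun := fun v => ∑ j, tm A (v j) (f (Pi.single j 1))
      map_add' := fun v w => by simp [add_tm, Finset.sum_add_distrib]
      map_smul' := fun b v => by simp [Finset.smul_sum, smul_tm] }
  refine Module.Finite.of_surjective c fun t => ?_
  induction t using BT_ind with
  | h0 => exact ⟨0, map_zero c⟩
  | h1 x y =>
    obtain ⟨v, rfl⟩ := hf y
    refine ⟨fun j => op (v j) • x, ?_⟩
    change ∑ j, tm A (op (v j) • x) (f (Pi.single j 1)) = _
    simp only [tm_smul, ← tm_sum, ← map_smul, ← map_sum]
    congr 2
    ext j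
    simp [Pi.single_apply]
  | h2 a b ha hb =>
    obtain ⟨a, rfl⟩ := ha
    obtain ⟨b, rfl⟩ := hb
    exact ⟨a + b, map_add c a b⟩

lemma BT_fgproj [Module.Finite B N] [Module.Projective B N] (P : Type u) [AddCommGroup P]
    [Module A P] [Module.Finite A P] [Module.Projective A P] :
    Module.Finite B (BT A N P) ∧ Module.Projective B (BT A N P) := by
  obtain ⟨n, p, φ, hφ⟩ := dualBasis (R := A) P
  let s : BT A N P →ₗ[B] (Fin n → N) := LinearMap.pi fun j => liftL
    (lift (fun x y => op (φ j y) • x) ⟨fun a b y => by simp,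
      fun x a b => by simp [add_smul], fun r x y => by simp [mul_smul]⟩)
    (fun b x y => (smul_comm b (op (φ j y)) x).symm)
  let r : (Fin n → N) →ₗ[B] BT A N P :=
    { toFun := fun v => ∑ j, tm A (v j) (p j)
      map_add' := fun v w => by simp [add_tm, Finset.sum_add_distrib]
      map_smul' := fun b v => by simp [Finset.smul_sum, smul_tm] }
  refine fgproj_of_retract (Q := Fin n → N) inferInstance
    (projPi N n) s r fun t => ?_
  induction t using BT_ind with
  | h0 => simp
  | h1 x y =>
    change ∑ j, tm A (op (φ j y) • x) (p j) = _
    simp only [tm_smul, ← tm_sum, hφ]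
  | h2 a b ha hb => rw [map_add, map_add, ha, hb]

lemma memAdd_F {M₀ X : ModuleCat.{u} A} (h : MemAdd A M₀ X) :
    MemAdd B (ModuleCat.of B (BT A N M₀)) (ModuleCat.of B (BT A N X)) := by
  obtain ⟨n, s, r, h⟩ := retract_of_memAdd h
  let S : BT A N X →ₗ[B] (Fin n → BT A N M₀) :=
    LinearMap.pi fun j => mapR N B (LinearMap.proj j ∘ₗ s)
  let T : (Fin n → BT A N M₀) →ₗ[B] BT A N X :=
    ∑ j, mapR N B (r ∘ₗ LinearMap.single A (fun _ => (M₀ : Type u)) j) ∘ₗ LinearMap.proj j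
  refine memAdd_of_retract (ι := Fin n) S T fun t => ?_
  change T (S t) = t
  induction t using BT_ind with
  | h0 => simp
  | h1 x y =>
    have : T (S (tm A x y)) = ∑ j, tm A x (r (Pi.single j (s y j))) := by
      simp [T, S]
    rw [this, ← tm_sum, ← map_sum, Finset.univ_sum_single, h]
  | h2 a b ha hb => rw [map_add, map_add, ha, hb]

variable [Module.Finite Aᵐᵒᵖ N] [Module.Projective Aᵐᵒᵖ N]

lemma bracket_F {M₀ : ModuleCat.{u} A} : ∀ (n : ℕ) {X : ModuleCat.{u} A}, X ∈ bracket A M₀ n →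
    ModuleCat.of B (BT A N X) ∈ bracket B (ModuleCat.of B (BT A N M₀)) n
  | 0, X, hX => by
    have : Subsingleton X := hX
    change Subsingleton (BT A N X)
    refine subsingleton_of_forall_eq 0 fun t => ?_
    induction t using BT_ind with
    | h0 => rfl
    | h1 x y => rw [Subsingleton.elim y 0, tm_zero]
    | h2 a b ha hb => rw [ha, hb, add_zero]
  | n + 1, X, hX => by
    obtain ⟨M₁, M₂, E, f, g, s, r, h₁, h₂, hfg, hsr⟩ := bullet_retract hX
    exact bullet_of_retract (M₁ := ModuleCat.of B (BT A N M₁)) (M₂ := ModuleCat.of B (BT A N M₂))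
      (E := ModuleCat.of B (BT A N E)) (X := ModuleCat.of B (BT A N X)) (memAdd_F h₁)
      (bracket_F n h₂) (mapR N B f) (mapR N B g) (mapR_ses hfg) (mapR N B s) (mapR N B r)
      (fun t => by rw [mapR_comp_apply]; exact mapR_id_apply hsr t)

variable [Module.Finite B N] [Module.Projective B N]

lemma syzygyCat_F : ∀ (n : ℕ) {X : ModuleCat.{u} A}, X ∈ syzygyCat A n →
    ModuleCat.of B (BT A N X) ∈ syzygyCat B n
  | 0, X, hX => by
    have : Module.Finite A X := hX
    exact BT_finite (B := B) (N := N) X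
  | n + 1, X, hX => by
    obtain ⟨hX, P, K, hP, hP', hK, f, g, hfg⟩ := hX
    exact ⟨BT_finite (B := B) (N := N) X, ModuleCat.of B (BT A N P), ModuleCat.of B (BT A N K),
      (BT_fgproj P).1, (BT_fgproj P).2, syzygyCat_F n hK, mapR N B f, mapR N B g, mapR_ses hfg⟩

lemma infSyzygyCat_F {X : ModuleCat.{u} A} (hX : X ∈ infSyzygyCat A) :
    ModuleCat.of B (BT A N X) ∈ infSyzygyCat B := by
  obtain ⟨hX, K, P, ⟨e⟩, h⟩ := hX
  refine ⟨BT_finite (B := B) (N := N) X, fun i => ModuleCat.of B (BT A N (K i)),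
    fun i => ModuleCat.of B (BT A N (P i)), ⟨?_⟩, fun i => ?_⟩
  · exact LinearEquiv.ofLinearMap (mapR N B e.toLinearMap) (mapR N B e.symm.toLinearMap)
      (LinearMap.ext fun t => by
        rw [LinearMap.comp_apply, mapR_comp_apply]; exact mapR_id_apply (by simp) t)
      (LinearMap.ext fun t => by
        rw [LinearMap.comp_apply, mapR_comp_apply]; exact mapR_id_apply (by simp) t)
  · obtain ⟨hP, hP', f, g, hfg⟩ := h i
    exact ⟨(BT_fgproj (P i)).1, (BT_fgproj (P i)).2, mapR N B f, mapR N B g, mapR_ses hfg⟩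

end Functor

section Env

variable (k : Type u) [Field k] (A : Type u) [Ring A] [Algebra k A]

/-- A module over the enveloping algebra, seen as a bimodule. -/
def LR (W : Type u) [AddCommGroup W] [Module (A ⊗[k] Aᵐᵒᵖ) W] : Type u := W

variable (W : Type u) [AddCommGroup W] [Module (A ⊗[k] Aᵐᵒᵖ) W]

instance : AddCommGroup (LR k A W) := inferInstanceAs (AddCommGroup W)

noncomputable instance lrEnv : Module (A ⊗[k] Aᵐᵒᵖ) (LR k A W) :=
  inferInstanceAs (Module (A ⊗[k] Aᵐᵒᵖ) W)

noncomputable instance lrLeft : Module A (LR k A W) :=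
  Module.compHom (LR k A W)
    (Algebra.TensorProduct.includeLeft : A →ₐ[k] A ⊗[k] Aᵐᵒᵖ).toRingHom

noncomputable instance lrRight : Module Aᵐᵒᵖ (LR k A W) :=
  Module.compHom (LR k A W)
    (Algebra.TensorProduct.includeRight : Aᵐᵒᵖ →ₐ[k] A ⊗[k] Aᵐᵒᵖ).toRingHom

variable {W} {k A}

lemma lr_left (a : A) (w : LR k A W) : a • w = (a ⊗ₜ[k] (1 : Aᵐᵒᵖ)) • w := rfl

lemma lr_right (a : Aᵐᵒᵖ) (w : LR k A W) : a • w = ((1 : A) ⊗ₜ[k] a) • w := rfl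

instance : SMulCommClass A Aᵐᵒᵖ (LR k A W) where
  smul_comm a b w := by
    rw [lr_left, lr_right, lr_left, lr_right, ← mul_smul, ← mul_smul]
    simp

variable {W' : Type u} [AddCommGroup W'] [Module (A ⊗[k] Aᵐᵒᵖ) W']

/-- A bimodule map is right linear. -/
def lrMap (g : W →ₗ[A ⊗[k] Aᵐᵒᵖ] W') : LR k A W →ₗ[Aᵐᵒᵖ] LR k A W' where
  toFun w := g w
  map_add' := map_add g
  map_smul' _ _ := map_smul g _ _

/-- The functor `- ⊗_A X`. -/
noncomputable def tmap (X : Type u) [AddCommGroup X] [Module A X]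
    (g : W →ₗ[A ⊗[k] Aᵐᵒᵖ] W') :
    BT A (LR k A W) X →ₗ[A] BT A (LR k A W') X :=
  mapL X (lrMap g) (fun _ _ => map_smul g _ _)

lemma tmap_tm (X : Type u) [AddCommGroup X] [Module A X]
    (g : W →ₗ[A ⊗[k] Aᵐᵒᵖ] W') (w : LR k A W) (x : X) :
    tmap X g (tm A w x) = tm A (lrMap g w) x := rfl

lemma lr_right_projective [Module.Finite (A ⊗[k] Aᵐᵒᵖ) W]
    [Module.Projective (A ⊗[k] Aᵐᵒᵖ) W] : Module.Projective Aᵐᵒᵖ (LR k A W) := by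
  have hfin : Module.Finite (A ⊗[k] Aᵐᵒᵖ) (LR k A W) := ‹Module.Finite (A ⊗[k] Aᵐᵒᵖ) W›
  have hproj : Module.Projective (A ⊗[k] Aᵐᵒᵖ) (LR k A W) :=
    ‹Module.Projective (A ⊗[k] Aᵐᵒᵖ) W›
  obtain ⟨n, p, φ, hφ⟩ := dualBasis (R := A ⊗[k] Aᵐᵒᵖ) (LR k A W)
  have : Module.Projective Aᵐᵒᵖ (Fin n → Aᵐᵒᵖ ⊗[k] A) := projPi _ n
  let c := TensorProduct.comm k A Aᵐᵒᵖ
  have hc : ∀ (a : Aᵐᵒᵖ) (e : A ⊗[k] Aᵐᵒᵖ), c (((1 : A) ⊗ₜ[k] a) * e) = a • c e := by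
    intro a e
    induction e using TensorProduct.induction_on with
    | zero => simp
    | tmul x y => simp [c, TensorProduct.smul_tmul']
    | add x y hx hy => rw [mul_add, map_add, hx, hy, map_add, smul_add]
  have hc' : ∀ (a : Aᵐᵒᵖ) e, c.symm (a • e) = ((1 : A) ⊗ₜ[k] a) * c.symm e := by
    intro a e
    apply c.injective
    rw [hc, c.apply_symm_apply, c.apply_symm_apply]
  let s : LR k A W →ₗ[Aᵐᵒᵖ] (Fin n → Aᵐᵒᵖ ⊗[k] A) :=
    { toFun := fun w j => c (φ j w)
      map_add' := fun v w => by
        ext j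
        exact (congrArg c (map_add (φ j) v w)).trans (map_add c _ _)
      map_smul' := fun a w => by
        ext j
        exact (congrArg c (map_smul (φ j) ((1 : A) ⊗ₜ[k] a) w)).trans (hc a _) }
  let r : (Fin n → Aᵐᵒᵖ ⊗[k] A) →ₗ[Aᵐᵒᵖ] LR k A W :=
    { toFun := fun v => ∑ j, c.symm (v j) • p j
      map_add' := fun v w => by
        simp [add_smul, Finset.sum_add_distrib]
      map_smul' := fun a v => by
        simp only [Pi.smul_apply, hc', mul_smul, lr_right, Finset.smul_sum, RingHom.id_apply] }
  refine Module.Projective.of_split s r (LinearMap.ext fun w => ?_)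
  change ∑ j, c.symm (c (φ j w)) • p j = w
  simp only [c.symm_apply_apply]
  exact hφ w

lemma tmap_fgproj [Module.Finite (A ⊗[k] Aᵐᵒᵖ) W]
    [Module.Projective (A ⊗[k] Aᵐᵒᵖ) W] [Module.Finite k A]
    (X : Type u) [AddCommGroup X] [Module A X] [Module.Finite A X] :
    Module.Finite A (BT A (LR k A W) X) ∧ Module.Projective A (BT A (LR k A W) X) := by
  have hfin : Module.Finite (A ⊗[k] Aᵐᵒᵖ) (LR k A W) := ‹Module.Finite (A ⊗[k] Aᵐᵒᵖ) W›
  have hproj : Module.Projective (A ⊗[k] Aᵐᵒᵖ) (LR k A W) :=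
    ‹Module.Projective (A ⊗[k] Aᵐᵒᵖ) W›
  obtain ⟨n, p, φ, hφ⟩ := dualBasis (R := A ⊗[k] Aᵐᵒᵖ) (LR k A W)
  let _ : Module k X := Module.compHom X (algebraMap k A)
  have hk : ∀ (c : k) (x : X), c • x = algebraMap k A c • x := fun _ _ => rfl
  have : IsScalarTower k A X := IsScalarTower.of_algebraMap_smul fun _ _ => rfl
  have : Module.Finite k X := Module.Finite.trans A X
  have : Module.Projective A (Fin n → A ⊗[k] X) := projPi _ n
  let ℓ : X → (Aᵐᵒᵖ →ₗ[k] X) := fun x =>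
    { toFun := fun a => a.unop • x
      map_add' := fun a b => by simp [add_smul]
      map_smul' := fun c a => by simp }
  let θ : X → (A ⊗[k] Aᵐᵒᵖ →ₗ[k] A ⊗[k] X) := fun x => LinearMap.lTensor A (ℓ x)
  have θt : ∀ x a b, θ x (a ⊗ₜ b) = a ⊗ₜ (b.unop • x) := fun _ _ _ => rfl
  have θl : ∀ x a e, θ x ((a ⊗ₜ[k] (1 : Aᵐᵒᵖ)) * e) = a • θ x e := by
    intro x a e
    induction e using TensorProduct.induction_on with
    | zero => simp
    | tmul u v => simp [θt, TensorProduct.smul_tmul']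
    | add u v hu hv => rw [mul_add, map_add, hu, hv, map_add, smul_add]
  have θr : ∀ x (a : A) e, θ x (((1 : A) ⊗ₜ[k] op a) * e) = θ (a • x) e := by
    intro x a e
    induction e using TensorProduct.induction_on with
    | zero => simp
    | tmul u v => simp [θt, mul_smul]
    | add u v hu hv => rw [mul_add, map_add, hu, hv, map_add]
  have θa : ∀ x y e, θ (x + y) e = θ x e + θ y e := by
    intro x y e
    induction e using TensorProduct.induction_on with
    | zero => simp
    | tmul u v => simp [θt, TensorProduct.tmul_add]
    | add u v hu hv => rw [map_add, hu, hv, map_add, map_add]; abel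
  let s : BT A (LR k A W) X →ₗ[A] (Fin n → A ⊗[k] X) := LinearMap.pi fun j => liftL
    (lift (fun w x => θ x (φ j w)) ⟨fun a b y => (congrArg (θ y) (map_add (φ j) a b)).trans
        (map_add (θ y) _ _), fun w x y => θa x y _,
      fun a w x => (congrArg (θ x) (map_smul (φ j) _ w)).trans (θr x a _)⟩)
    (fun a w x => (congrArg (θ x) (map_smul (φ j) _ w)).trans (θl x a _))
  let r0 : Fin n → (A →+ X →+ BT A (LR k A W) X) := fun j =>
    { toFun := fun a => tmHom A (a • p j)
      map_zero' := AddMonoidHom.ext fun x =>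
        (congrArg (fun z => tm A z x) (zero_smul A (p j))).trans (zero_tm A x)
      map_add' := fun a b => AddMonoidHom.ext fun x =>
        (congrArg (fun z => tm A z x) (add_smul a b (p j))).trans (add_tm A _ _ x) }
  let rr : Fin n → (A ⊗[k] X →+ BT A (LR k A W) X) := fun j =>
    TensorProduct.liftAddHom
      (r0 j)
      (fun c a x => by
        change tm A ((c • a) • p j) x = tm A (a • p j) (c • x)
        rw [hk, ← tm_smul, lr_right, lr_left, lr_left, ← mul_smul]
        congr 2
        rw [Algebra.TensorProduct.tmul_mul_tmul, one_mul, mul_one, ← MulOpposite.algebraMap_apply,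
          Algebra.algebraMap_eq_smul_one, TensorProduct.smul_tmul])
  have rrt : ∀ j a x, rr j (a ⊗ₜ x) = tm A (a • p j) x := fun _ _ _ => rfl
  have rrs : ∀ j (a : A) t, rr j (a • t) = a • rr j t := by
    intro j a t
    induction t using TensorProduct.induction_on with
    | zero => simp
    | tmul u v => rw [TensorProduct.smul_tmul', rrt, rrt, smul_tm, smul_eq_mul, mul_smul]
    | add u v hu hv => rw [smul_add, map_add, hu, hv, map_add, smul_add]
  have rrθ : ∀ j x e, rr j (θ x e) = tm A (e • p j) x := by
    intro j x e
    induction e using TensorProduct.induction_on with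
    | zero => rw [map_zero, map_zero]; exact ((congrArg (fun z => tm A z x) (zero_smul (A ⊗[k] Aᵐᵒᵖ) (p j))).trans (zero_tm A x)).symm
    | tmul u v =>
      rw [θt, rrt, ← tm_smul, op_unop, lr_left, lr_right, ← mul_smul]
      simp
    | add u v hu hv => rw [map_add, map_add, hu, hv, add_smul, add_tm]
  let r : (Fin n → A ⊗[k] X) →ₗ[A] BT A (LR k A W) X :=
    { toFun := fun v => ∑ j, rr j (v j)
      map_add' := fun v w => by simp [Finset.sum_add_distrib]
      map_smul' := fun a v => by simp [rrs, Finset.smul_sum] }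
  refine fgproj_of_retract (Q := Fin n → A ⊗[k] X) inferInstance inferInstance s r fun t => ?_
  induction t using BT_ind with
  | h0 => simp
  | h1 w x =>
    change ∑ j, rr j (θ x (φ j w)) = _
    simp only [rrθ, ← sum_tm]
    congr 1
    exact hφ w
  | h2 a b ha hb => rw [map_add, map_add, ha, hb]

lemma tensor_step [Module.Finite k A] {V K : ModuleCat.{u} (A ⊗[k] Aᵐᵒᵖ)}
    (h : IsSyzygyStep (A ⊗[k] Aᵐᵒᵖ) V K) (hV : Module.Projective Aᵐᵒᵖ (LR k A V))
    (X : Type u) [AddCommGroup X] [Module A X] [Module.Finite A X] :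
    IsSyzygyStep A (ModuleCat.of A (BT A (LR k A V) X)) (ModuleCat.of A (BT A (LR k A K) X)) ∧
      Module.Projective Aᵐᵒᵖ (LR k A K) := by
  obtain ⟨P, hP, hP', f, g, hf, hg, hfg⟩ := h
  have gf : ∀ x, g (f x) = 0 := fun x => by
    have : f x ∈ LinearMap.ker g := hfg ▸ LinearMap.mem_range_self f x
    exact this
  have hPr : Module.Projective Aᵐᵒᵖ (LR k A P) := lr_right_projective
  obtain ⟨s, hs⟩ := Module.projective_lifting_property (lrMap g) LinearMap.id hg
  have hs : ∀ v, lrMap g (s v) = v := fun v => LinearMap.congr_fun hs v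
  have hr' : ∀ y, lrMap g y = 0 → y ∈ LinearMap.range (lrMap f) := fun y hy => by
    have : (y : P) ∈ LinearMap.ker g := hy
    rw [← hfg] at this
    exact this
  let e : LR k A K ≃ₗ[Aᵐᵒᵖ] LinearMap.range (lrMap f) := LinearEquiv.ofInjective (lrMap f) hf
  let q : LR k A P →ₗ[Aᵐᵒᵖ] LinearMap.range (lrMap f) :=
    (LinearMap.id - s ∘ₗ lrMap g).codRestrict (LinearMap.range (lrMap f)) (fun y => hr' _ (by
      simp [hs]))
  let r : LR k A P →ₗ[Aᵐᵒᵖ] LR k A K := e.symm.toLinearMap ∘ₗ q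
  have h1 : ∀ y, lrMap f (r y) + s (lrMap g y) = y := fun y => by
    have : lrMap f (r y) = y - s (lrMap g y) := by
      have h0 := congrArg Subtype.val (e.apply_symm_apply (q y))
      exact h0
    rw [this, sub_add_cancel]
  have gf' : ∀ x, lrMap g (lrMap f x) = 0 := gf
  have h2 : ∀ y, r (lrMap f y) = y := fun y => by
    have := h1 (lrMap f y)
    rw [gf', map_zero, add_zero] at this
    exact hf this
  refine ⟨⟨ModuleCat.of A (BT A (LR k A P) X), (tmap_fgproj X).1, (tmap_fgproj X).2,
    tmap X f, tmap X g, ?_, ?_, ?_⟩, Module.Projective.of_split (lrMap f) r (LinearMap.ext h2)⟩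
  · refine Function.LeftInverse.injective (g := bmap r LinearMap.id) fun t => ?_
    induction t using BT_ind with
    | h0 => exact (congrArg _ (map_zero (tmap X f))).trans (map_zero _)
    | h1 x y =>
      change tm A (r (lrMap f x)) y = _
      rw [h2]
    | h2 a b ha hb =>
      refine (congrArg _ (map_add (tmap X f) a b)).trans ((map_add _ _ _).trans ?_)
      exact congrArg₂ _ ha hb
  · refine Function.RightInverse.surjective (g := bmap s LinearMap.id) fun t => ?_
    change tmap X g (bmap s LinearMap.id t) = t
    induction t using BT_ind with
    | h0 => simp
    | h1 x y => simp [tmap_tm, hs]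
    | h2 a b ha hb => simp only [map_add, ha, hb]
  · ext t
    constructor
    · rintro ⟨v, rfl⟩
      change tmap X g (tmap X f v) = 0
      induction v using BT_ind with
      | h0 => simp
      | h1 x y => simp [tmap_tm, gf', zero_tm]
      | h2 a b ha hb => simp only [map_add, ha, hb, add_zero]
    · intro ht
      have ht : tmap X g t = 0 := ht
      refine ⟨bmap r LinearMap.id t, ?_⟩
      change tmap X f (bmap r LinearMap.id t) = t
      have key : ∀ t : BT A (LR k A P) X, tmap X f (bmap r LinearMap.id t) +
          bmap s LinearMap.id (tmap X g t) = t := fun t => by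
        induction t using BT_ind with
        | h0 => simp
        | h1 x y => simp [tmap_tm, ← add_tm, h1]
        | h2 a b ha hb =>
          conv_rhs => rw [← ha, ← hb]
          simp only [map_add]
          abel
      have := key t
      rwa [ht, map_zero, add_zero] at this

lemma tensor_nth [Module.Finite k A] (X : Type u) [AddCommGroup X] [Module A X]
    [Module.Finite A X] : ∀ (n : ℕ) {V K : ModuleCat.{u} (A ⊗[k] Aᵐᵒᵖ)},
    IsNthSyzygy (A ⊗[k] Aᵐᵒᵖ) n V K → Module.Projective Aᵐᵒᵖ (LR k A V) →
    IsNthSyzygy A n (ModuleCat.of A (BT A (LR k A V) X)) (ModuleCat.of A (BT A (LR k A K) X))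
  | 0, V, K, ⟨e⟩, _ => ⟨LinearEquiv.ofLinearMap (tmap X e.toLinearMap) (tmap X e.symm.toLinearMap)
      (BTL_ext fun x y => congrArg (fun z => tm A z y) (e.apply_symm_apply x))
      (BTL_ext fun x y => congrArg (fun z => tm A z y) (e.symm_apply_apply x))⟩
  | n + 1, V, K, ⟨K₁, h1, h2⟩, hV => by
    obtain ⟨h3, h4⟩ := tensor_step h1 hV X
    exact ⟨_, h3, tensor_nth X n h2 h4⟩

lemma tensor_stable [Module.Finite k A] (X : Type u) [AddCommGroup X] [Module A X]
    [Module.Finite A X] {V K : ModuleCat.{u} (A ⊗[k] Aᵐᵒᵖ)}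
    (h : StablyIsomorphic (A ⊗[k] Aᵐᵒᵖ) V K) :
    StRet A (BT A (LR k A K) X) (BT A (LR k A V) X) := by
  obtain ⟨P, Q, hP, hP', hQ, hQ', ⟨e⟩⟩ := h
  let a : K →ₗ[A ⊗[k] Aᵐᵒᵖ] V := LinearMap.fst _ V P ∘ₗ e.symm.toLinearMap ∘ₗ LinearMap.inl _ K Q
  let c : K →ₗ[A ⊗[k] Aᵐᵒᵖ] P := LinearMap.snd _ V P ∘ₗ e.symm.toLinearMap ∘ₗ LinearMap.inl _ K Q
  let b : V →ₗ[A ⊗[k] Aᵐᵒᵖ] K := LinearMap.fst _ K Q ∘ₗ e.toLinearMap ∘ₗ LinearMap.inl _ V P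
  let d : P →ₗ[A ⊗[k] Aᵐᵒᵖ] K := LinearMap.fst _ K Q ∘ₗ e.toLinearMap ∘ₗ LinearMap.inr _ V P
  have h : ∀ x, b (a x) + d (c x) = x := fun x => by
    have : (a x, (0 : P)) + ((0 : V), c x) = e.symm (x, 0) := by
      simp [a, c]
    have h3 : (e ((a x, (0 : P)) + ((0 : V), c x))).1 = b (a x) + d (c x) := by
      rw [map_add]; rfl
    rw [← h3, this, e.apply_symm_apply]
  refine ⟨ModuleCat.of A (BT A (LR k A P) X), (tmap_fgproj X).1, (tmap_fgproj X).2,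
    tmap X a, tmap X b, tmap X c, tmap X d, fun t => ?_⟩
  change tmap X b (tmap X a t) + tmap X d (tmap X c t) = t
  induction t using BT_ind with
  | h0 => simp
  | h1 x y =>
    simp only [tmap_tm, ← add_tm]
    congr 1
    exact h x
  | h2 u v hu hv =>
    conv_rhs => rw [← hu, ← hv]
    simp only [map_add]
    abel

end Env

section Main

lemma isSyzygyStep_congr {R : Type u} [Ring R] {W W' K : ModuleCat.{u} R} (e : W' ≃ₗ[R] W)
    (h : IsSyzygyStep R W' K) : IsSyzygyStep R W K := by
  obtain ⟨P, hP, hP', f, g, hf, hg, hfg⟩ := h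
  refine ⟨P, hP, hP', f, e.toLinearMap ∘ₗ g, hf, e.surjective.comp hg, ?_⟩
  rw [hfg]
  ext x
  simp

lemma isNthSyzygy_snoc {R : Type u} [Ring R] : ∀ (n : ℕ) {W K₁ K : ModuleCat.{u} R},
    IsNthSyzygy R n W K₁ → IsSyzygyStep R K₁ K → IsNthSyzygy R (n + 1) W K
  | 0, _, _, K, ⟨e⟩, h => ⟨K, isSyzygyStep_congr e h, ⟨LinearEquiv.refl R K⟩⟩
  | n + 1, _, _, _, ⟨K', h1, h2⟩, h => ⟨K', h1, isNthSyzygy_snoc n h2 h⟩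

lemma syzygyCat_finite {R : Type u} [Ring R] : ∀ (n : ℕ) {X : ModuleCat.{u} R},
    X ∈ syzygyCat R n → Module.Finite R X
  | 0, _, h => h
  | _ + 1, _, h => h.1

lemma syzygyCat_add {R : Type u} [Ring R] (i : ℕ) : ∀ (l : ℕ) {Y : ModuleCat.{u} R},
    Y ∈ syzygyCat R (i + l) → ∃ Z ∈ syzygyCat R i, IsNthSyzygy R l Z Y
  | 0, Y, h => ⟨Y, h, ⟨LinearEquiv.refl R Y⟩⟩
  | l + 1, Y, h => by
    obtain ⟨_, P, K, hP, hP', hK, hfg⟩ := h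
    obtain ⟨Z, hZ, hZK⟩ := syzygyCat_add i l hK
    exact ⟨Z, hZ, isNthSyzygy_snoc l hZK ⟨P, hP, hP', hfg⟩⟩

lemma infSyzygyCat_add {R : Type u} [Ring R] (l : ℕ) {Y : ModuleCat.{u} R}
    (h : Y ∈ infSyzygyCat R) : ∃ Z ∈ infSyzygyCat R, IsNthSyzygy R l Z Y := by
  induction l with
  | zero => exact ⟨Y, h, ⟨LinearEquiv.refl R Y⟩⟩
  | succ l ih =>
    obtain ⟨Z, ⟨hZ, K, P, ⟨e⟩, hKP⟩, hZY⟩ := ih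
    obtain ⟨hP, hP', f, g, hf, hg, hfg⟩ := hKP 0
    refine ⟨K 1, ⟨Module.Finite.of_surjective g hg, fun i => K (i + 1), fun i => P (i + 1),
      ⟨LinearEquiv.refl R _⟩, fun i => hKP (i + 1)⟩, Z, ?_, hZY⟩
    refine ⟨P 0, hP, hP', f ∘ₗ e.symm.toLinearMap, g, hf.comp e.symm.injective, hg, ?_⟩
    rw [← hfg]
    ext x
    constructor
    · rintro ⟨y, rfl⟩; exact ⟨e.symm y, rfl⟩
    · rintro ⟨y, rfl⟩; exact ⟨e y, by simp⟩

variable {k : Type u} [Field k]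
variable {A B : Type u} [Ring A] [Ring B] [Algebra k A] [Algebra k B]
variable {M : Type u} [AddCommGroup M] [Module k M] [Module A M] [Module Bᵐᵒᵖ M]
variable [IsScalarTower k A M] [IsScalarTower k Bᵐᵒᵖ M] [SMulCommClass A Bᵐᵒᵖ M]
variable {N : Type u} [AddCommGroup N] [Module k N] [Module B N] [Module Aᵐᵒᵖ N]
variable [IsScalarTower k B N] [IsScalarTower k Aᵐᵒᵖ N] [SMulCommClass B Aᵐᵒᵖ N]

lemma BT_tower_left : IsScalarTower k A (BT B M N) where
  smul_assoc c a t := by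
    induction t using BT_ind with
    | h0 => simp
    | h1 x y => simp only [smul_tm, smul_assoc]
    | h2 u v hu hv => simp only [smul_add, hu, hv]

lemma BT_tower_right : IsScalarTower k Aᵐᵒᵖ (BT B M N) where
  smul_assoc c a t := by
    induction t using BT_ind with
    | h0 => simp
    | h1 x y =>
      rw [rsmul_tm, rsmul_tm, smul_tm, smul_assoc]
      rw [← algebraMap_smul Bᵐᵒᵖ c x, MulOpposite.algebraMap_apply, tm_smul,
        algebraMap_smul]
    | h2 u v hu hv => simp only [smul_add, hu, hv]

/-- The canonical bimodule identification. -/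
def fromEnv (T : Type u) [AddCommGroup T] [Module k T] [Module A T]
    [Module Aᵐᵒᵖ T] [IsScalarTower k A T] [IsScalarTower k Aᵐᵒᵖ T] [SMulCommClass A Aᵐᵒᵖ T] :
    LR k A (envModuleCat k A T) ≃+ T := AddEquiv.refl T

section FromEnv

variable (T : Type u) [AddCommGroup T] [Module k T] [Module A T]
    [Module Aᵐᵒᵖ T] [IsScalarTower k A T] [IsScalarTower k Aᵐᵒᵖ T] [SMulCommClass A Aᵐᵒᵖ T]

lemma fromEnv_left (a : A) (t : LR k A (envModuleCat k A T)) :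
    fromEnv T (a • t) = a • fromEnv T t := by
  change a • (1 : Aᵐᵒᵖ) • (fromEnv T t) = _
  rw [one_smul]

lemma fromEnv_right (a : Aᵐᵒᵖ) (t : LR k A (envModuleCat k A T)) :
    fromEnv T (a • t) = a • fromEnv T t := by
  change (1 : A) • a • (fromEnv T t) = _
  rw [one_smul]

/-- The canonical bimodule identification, right linear. -/
def fromEnvR : LR k A (envModuleCat k A T) ≃ₗ[Aᵐᵒᵖ] T :=
  { fromEnv (k := k) (A := A) T with map_smul' := fromEnv_right T }

lemma fromEnvR_symm_left (a : A) (t : T) :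
    (fromEnvR (k := k) (A := A) T).symm (a • t) = a • (fromEnvR (k := k) (A := A) T).symm t := by
  apply (fromEnvR (k := k) (A := A) T).injective
  rw [LinearEquiv.apply_symm_apply]
  exact ((fromEnv_left (k := k) T a _).trans
    (congrArg (fun z => a • z) ((fromEnvR (k := k) (A := A) T).apply_symm_apply t))).symm

/-- The tensor product of the canonical bimodule identification. -/
noncomputable def envTensor (X : Type u) [AddCommGroup X] [Module A X] :
    BT A (LR k A (envModuleCat k A T)) X ≃ₗ[A] BT A T X :=
  LinearEquiv.ofLinearMap
    (mapL X (fromEnvR (k := k) (A := A) T).toLinearMap (fromEnv_left (k := k) T))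
    (mapL X (fromEnvR (k := k) (A := A) T).symm.toLinearMap (fromEnvR_symm_left (k := k) T))
    (BTL_ext fun x y => congrArg (fun z => tm A z y)
      ((fromEnvR (k := k) (A := A) T).apply_symm_apply x))
    (BTL_ext fun x y => congrArg (fun z => tm A z y)
      ((fromEnvR (k := k) (A := A) T).symm_apply_apply x))

end FromEnv

/-- `A ⊗_A X ≅ X`. -/
noncomputable def unitEquiv (X : Type u) [AddCommGroup X] [Module A X] : BT A A X ≃ₗ[A] X :=
  LinearEquiv.ofLinearMap
    (liftL (lift (fun (a : A) (x : X) => a • x) ⟨fun a b y => add_smul a b y,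
      fun x a b => smul_add x a b, fun r x y => mul_smul x r y⟩)
      (fun s x y => mul_smul s x y))
    { toFun := fun x => tm A 1 x
      map_add' := tm_add A 1
      map_smul' := fun a x => by
        dsimp
        rw [smul_tm, ← tm_smul]
        simp }
    (LinearMap.ext fun x => one_smul A x)
    (BTL_ext fun a x => by
      change tm A 1 (a • x) = tm A a x
      rw [← tm_smul]
      simp)

/-- Associativity. -/
noncomputable def assocEquiv (A B M N : Type u) [Ring A] [Ring B]
    [AddCommGroup M] [Module A M] [Module Bᵐᵒᵖ M] [SMulCommClass A Bᵐᵒᵖ M]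
    [AddCommGroup N] [Module B N] [Module Aᵐᵒᵖ N] [SMulCommClass B Aᵐᵒᵖ N]
    (X : Type u) [AddCommGroup X] [Module A X] :
    BT A (BT B M N) X ≃ₗ[A] BT B M (BT A N X) := by
  let φ : X → (BT B M N →+ BT B M (BT A N X)) := fun x =>
    lift (fun m n => tm B m (tm A n x)) ⟨fun a b y => add_tm B _ _ _,
      fun m a b => by dsimp only; rw [add_tm, tm_add],
      fun r m n => by dsimp only; rw [tm_smul, smul_tm]⟩
  have hφ : ∀ x m n, φ x (tm B m n) = tm B m (tm A n x) := fun _ _ _ => rfl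
  let ψ : M → (BT A N X →+ BT A (BT B M N) X) := fun m =>
    lift (fun n x => tm A (tm B m n) x) ⟨fun a b y => by dsimp only; rw [tm_add, add_tm],
      fun m a b => tm_add A _ _ _, fun r n x => by dsimp only; rw [← tm_smul, rsmul_tm]⟩
  have hψ : ∀ m n x, ψ m (tm A n x) = tm A (tm B m n) x := fun _ _ _ => rfl
  let F : BT A (BT B M N) X →ₗ[A] BT B M (BT A N X) := liftL
    (lift (fun t x => φ x t) ⟨fun a b y => map_add _ _ _, fun t x y => by
        induction t using BT_ind with
        | h0 => simp
        | h1 m n => simp only [hφ, tm_add]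
        | h2 u v hu hv => simp only [map_add, hu, hv]; abel, fun a t x => by
        induction t using BT_ind with
        | h0 => simp
        | h1 m n => dsimp only; rw [rsmul_tm, hφ, hφ, tm_smul]
        | h2 u v hu hv => simp only [smul_add, map_add, hu, hv]⟩)
    (fun a t x => by
        change φ x (a • t) = a • φ x t
        induction t using BT_ind with
        | h0 => simp
        | h1 m n => rw [smul_tm, hφ, hφ, smul_tm]
        | h2 u v hu hv => simp only [smul_add, map_add, hu, hv])
  let G : BT B M (BT A N X) →ₗ[A] BT A (BT B M N) X := liftL
    (lift (fun m t => ψ m t) ⟨fun a b t => by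
        induction t using BT_ind with
        | h0 => simp
        | h1 m n => simp only [hψ, add_tm]
        | h2 u v hu hv => simp only [map_add, hu, hv]; abel, fun m a b => map_add _ _ _,
        fun b m t => by
        induction t using BT_ind with
        | h0 => simp
        | h1 n x => dsimp only; rw [smul_tm, hψ, hψ, tm_smul]
        | h2 u v hu hv => simp only [smul_add, map_add, hu, hv]⟩)
    (fun a m t => by
        change ψ (a • m) t = a • ψ m t
        induction t using BT_ind with
        | h0 => simp
        | h1 n x => rw [hψ, hψ, smul_tm, smul_tm]
        | h2 u v hu hv => simp only [smul_add, map_add, hu, hv])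
  have hF : ∀ t x, F (tm A t x) = φ x t := fun _ _ => rfl
  have hG : ∀ m t, G (tm B m t) = ψ m t := fun _ _ => rfl
  refine LinearEquiv.ofLinearMap F G (BTL_ext fun m t => ?_) (BTL_ext fun t x => ?_)
  · simp only [LinearMap.comp_apply, LinearMap.id_apply, hG]
    induction t using BT_ind with
    | h0 => simp [tm_zero]
    | h1 n x => rw [hψ, hF, hφ]
    | h2 u v hu hv => rw [map_add, map_add, hu, hv, tm_add]
  · simp only [LinearMap.comp_apply, LinearMap.id_apply, hF]
    induction t using BT_ind with
    | h0 => simp [zero_tm]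
    | h1 m n => rw [hφ, hG, hψ]
    | h2 u v hu hv => rw [map_add, map_add, hu, hv, add_tm]

variable [Module.Finite k A] [Module.Finite k B]

lemma key {l : ℕ} (h : SingularEquivalenceOfMoritaTypeWithLevel k A B M N l)
    {Z Y : ModuleCat.{u} A} (hZ : Module.Finite A Z) (hY : IsNthSyzygy A l Z Y) :
    StRet A Y (BT B M (BT A N Z)) := by
  obtain ⟨-, -, -, -, -, -, -, -, h, -⟩ := h
  have i1 : IsScalarTower k A (BT B M N) := BT_tower_left
  have i2 : IsScalarTower k Aᵐᵒᵖ (BT B M N) := BT_tower_right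
  obtain ⟨K, hK, hs⟩ := h (BT B M N) (tm B) isTensor (fun _ _ _ => rfl) (fun _ _ _ => rfl)
    (fun _ _ _ => rfl)
  have hpr : Module.Projective Aᵐᵒᵖ (LR k A (envModuleCat k A A)) := by
    let eA : Aᵐᵒᵖ ≃ₗ[Aᵐᵒᵖ] A :=
      { (opAddEquiv (α := A)).symm with map_smul' := fun a b => rfl }
    have : Module.Projective Aᵐᵒᵖ A :=
      Module.Projective.of_equiv eA
    exact Module.Projective.of_equiv (fromEnvR (k := k) A).symm
  have h1 := tensor_nth (k := k) Z l hK hpr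
  have h2 : StRet A Y (BT A (LR k A K) Z) :=
    StRet.compare l hY h1 (StRet.of_equiv ((envTensor (k := k) A Z).trans (unitEquiv Z)).symm)
  have h3 := tensor_stable (k := k) Z hs
  have h4 := (envTensor (k := k) (BT B M N) Z).trans (assocEquiv A B M N Z)
  exact (h2.trans h3).trans (StRet.of_equiv h4)

lemma one_dir {l : ℕ} (h : SingularEquivalenceOfMoritaTypeWithLevel k A B M N l) :
    omegaExtDim A ≤ omegaExtDim B ∧
      extDimCat A (infSyzygyCat A) ≤ extDimCat B (infSyzygyCat B) := by
  have hk := @key k _ A B _ _ _ _ M _ _ _ _ _ _ _ N _ _ _ _ _ _ _ _ _ l h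
  obtain ⟨h1, h2, h3, h4, h5, h6, h7, h8, -, -⟩ := h
  have fin : ∀ M₀ : ModuleCat.{u} B, Module.Finite B M₀ →
      Module.Finite A (ModuleCat.of A (BT B M M₀ × A)) := fun M₀ _ => by
    have : Module.Finite A (BT B M M₀) := BT_finite M₀
    exact inferInstanceAs (Module.Finite A (BT B M M₀ × A))
  constructor
  · refine le_iInf fun i => (iInf_le _ (i + l)).trans (extDimCat_le fun n M₀ hM₀ hX => ?_)
    refine ⟨ModuleCat.of A (BT B M M₀ × A), fin M₀ hM₀, fun Y hY => ?_⟩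
    obtain ⟨Z, hZ, hZY⟩ := syzygyCat_add i l hY
    exact bracket_of_stRet n
      (bracket_F (B := A) (N := M) (n + 1) (hX _ (syzygyCat_F (B := B) (N := N) i hZ)))
      (hk (syzygyCat_finite i hZ) hZY)
  · refine extDimCat_le fun n M₀ hM₀ hX => ?_
    refine ⟨ModuleCat.of A (BT B M M₀ × A), fin M₀ hM₀, fun Y hY => ?_⟩
    obtain ⟨Z, hZ, hZY⟩ := infSyzygyCat_add l hY
    exact bracket_of_stRet n
      (bracket_F (B := A) (N := M) (n + 1) (hX _ (infSyzygyCat_F (B := B) (N := N) hZ)))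
      (hk hZ.1 hZY)

lemma symm_level {l : ℕ} (h : SingularEquivalenceOfMoritaTypeWithLevel k A B M N l) :
    SingularEquivalenceOfMoritaTypeWithLevel k B A N M l := by
  obtain ⟨h1, h2, h3, h4, h5, h6, h7, h8, h9, h10⟩ := h
  exact ⟨h5, h6, h7, h8, h1, h2, h3, h4, h10, h9⟩

end Main

end ExtDimAux

namespace ExtDim

section Statement

open scoped TensorProduct

variable (k : Type u) [Field k]
variable (A B : Type u) [Ring A] [Ring B] [Algebra k A] [Algebra k B]
variable [Module.Finite k A] [Module.Finite k B]
variable (M : Type u) [AddCommGroup M] [Module k M] [Module A M] [Module Bᵐᵒᵖ M]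
variable [IsScalarTower k A M] [IsScalarTower k Bᵐᵒᵖ M] [SMulCommClass A Bᵐᵒᵖ M]
variable (N : Type u) [AddCommGroup N] [Module k N] [Module B N] [Module Aᵐᵒᵖ N]
variable [IsScalarTower k B N] [IsScalarTower k Aᵐᵒᵖ N] [SMulCommClass B Aᵐᵒᵖ N]

/-- **Theorem 2.(2),(3)**: if the finite dimensional algebras `A` and `B` are singularly
equivalent of Morita type with level `l`, then `Ω-ext.dim(A) = Ω-ext.dim(B)` and
`ext.dim(Ω^∞(A-mod)) = ext.dim(Ω^∞(B-mod))`. -/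
theorem omegaExtDim_of_singularEquivalence_level (l : ℕ)
    (h : SingularEquivalenceOfMoritaTypeWithLevel k A B M N l) :
    omegaExtDim A = omegaExtDim B ∧
      extDimCat A (infSyzygyCat A) = extDimCat B (infSyzygyCat B) := by
  have h₁ := ExtDimAux.one_dir h
  have h₂ := ExtDimAux.one_dir (ExtDimAux.symm_level h)
  exact ⟨le_antisymm h₁.1 h₂.1, le_antisymm h₁.2 h₂.2⟩

end Statement

end ExtDim
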